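/- Let (X_0,d_0),(X_1,d_1),…,(X_q,d_q) be smooth vector fields on a neighborhood of 0 in ℝ^n, each paired with a ν-parameter degree, let W(t,x) be a smooth ℝ^n-valued map on a neighborhood of (0,0) in ℝ^N×ℝ^n with W(0,x) ≡ 0, and set (𝐗,𝐝) = {(X_1,d_1),…,(X_q,d_q)}. (i) If (𝐗,𝐝) strongly controls (X_0,d_0), then (𝐗,𝐝) controls (X_0,d_0). (ii) If (𝐗,𝐝) strongly controls W, then (𝐗,𝐝) controls W. -/

import Mathlib

open MeasureTheory Metric Filter Set
open scoped ENNReal NNReal Topology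

noncomputable section

namespace Zhang

/-- `ℝ^n` with the Euclidean norm. -/
abbrev Euc (n : ℕ) := EuclideanSpace ℝ (Fin n)

/-- Vector fields on `ℝ^n` (as everywhere-defined maps). -/
abbrev VF (n : ℕ) := Euc n → Euc n

/-- `ν`-parameter degrees. -/
abbrev Deg (ν : ℕ) := Fin ν → ℝ

variable {N ν n q : ℕ}

/-- Admissible multi-parameter dilation data `e = {e_1,…,e_N} ⊆ [0,∞)^ν`. -/
def AdmissibleE (e : Fin N → Fin ν → ℝ) : Prop :=
  (∀ i μ, 0 ≤ e i μ) ∧ (∀ i, ∃ μ, e i μ ≠ 0) ∧ (∀ μ, ∃ i, e i μ ≠ 0)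

/-- `δ^d = ∏_μ δ_μ^{d_μ}` (real exponents). -/
def dpow (δ d : Fin ν → ℝ) : ℝ := ∏ μ, δ μ ^ d μ

/-- The multi-parameter dilation `δ t = (δ^{e_1} t_1, …, δ^{e_N} t_N)`. -/
def dilate (e : Fin N → Fin ν → ℝ) (δ : Fin ν → ℝ) (t : Euc N) : Euc N :=
  (EuclideanSpace.equiv (Fin N) ℝ).symm fun i => dpow δ (e i) * t i

/-- `ς^{(δ)}(t) = δ^{e_1+⋯+e_N} ς(δ t)`. -/
def scaled (e : Fin N → Fin ν → ℝ) (ς : Euc N → ℝ) (δ : Fin ν → ℝ) : Euc N → ℝ :=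
  fun t => (∏ i, dpow δ (e i)) * ς (dilate e δ t)

/-- `2^k = (2^{k_1},…,2^{k_ν})`. -/
def twoPow (k : Fin ν → ℕ) : Fin ν → ℝ := fun μ => 2 ^ k μ

/-- The (global) `C^m` supremum norm of a function. -/
def CmSupNorm {E F : Type*} [NormedAddCommGroup E] [NormedSpace ℝ E]
    [NormedAddCommGroup F] [NormedSpace ℝ F] (m : ℕ) (f : E → F) : ℝ :=
  ∑ j ∈ Finset.range (m + 1), ⨆ t, ‖iteratedFDeriv ℝ j f t‖

/-- The `C^m` supremum norm of a function on a set. -/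
def CmSupNormOn {E F : Type*} [NormedAddCommGroup E] [NormedSpace ℝ E]
    [NormedAddCommGroup F] [NormedSpace ℝ F] (m : ℕ) (s : Set E) (f : E → F) : ℝ :=
  ∑ j ∈ Finset.range (m + 1), ⨆ t ∈ s, ‖iteratedFDerivWithin ℝ j f s t‖

/-- The cancellation condition: the integral of `g` in the coordinates `t_i` with
`e_i^μ ≠ 0` vanishes identically as a function of the remaining coordinates. -/
def CancelCond (e : Fin N → Fin ν → ℝ) (μ : Fin ν) (g : Euc N → ℝ) : Prop :=
  ∀ t : Fin N → ℝ,
    haveI : DecidablePred fun i : Fin N => e i μ ≠ 0 := Classical.decPred _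
    (∫ s : {i : Fin N // e i μ ≠ 0} → ℝ,
        g ((EuclideanSpace.equiv (Fin N) ℝ).symm fun i =>
          if h : e i μ ≠ 0 then s ⟨i, h⟩ else t i)) = 0

/-- Kernel data for the class `𝒦(N,e,a,ν)`: a sequence `{ς_k}_{k∈ℕ^ν}` bounded in
`C_c^∞(B^N(a))` satisfying the cancellation conditions. -/
def IsKernelSeq (e : Fin N → Fin ν → ℝ) (a : ℝ) (ς : (Fin ν → ℕ) → Euc N → ℝ) : Prop :=
  (∀ k, ContDiff ℝ (⊤ : ℕ∞) (ς k)) ∧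
  (∀ k, tsupport (ς k) ⊆ ball (0 : Euc N) a) ∧
  (∀ m, ∃ C : ℝ, ∀ k, CmSupNorm m (ς k) ≤ C) ∧
  (∀ k μ, k μ ≠ 0 → CancelCond e μ (ς k))

/-- Membership in the Fréchet space `𝒦̄(N,e,a,ν)` (closed ball support). -/
def MemKbar (e : Fin N → Fin ν → ℝ) (a : ℝ) (ς : (Fin ν → ℕ) → Euc N → ℝ) : Prop :=
  (∀ k, ContDiff ℝ (⊤ : ℕ∞) (ς k)) ∧
  (∀ k, tsupport (ς k) ⊆ closedBall (0 : Euc N) a) ∧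
  (∀ m, ∃ C : ℝ, ∀ k, CmSupNorm m (ς k) ≤ C) ∧
  (∀ k μ, k μ ≠ 0 → CancelCond e μ (ς k))

/-- The seminorm `‖{ς_k}‖_m = sup_k ‖ς_k‖_{C^m}` of `𝒦̄(N,e,a,ν)`. -/
def seqSeminorm (m : ℕ) (ς : (Fin ν → ℕ) → Euc N → ℝ) : ℝ :=
  ⨆ k, CmSupNorm m (ς k)

/-- The multi-indices `k ∈ ℕ^ν` with all coordinates `≤ M`. -/
def trunc (ν M : ℕ) : Finset (Fin ν → ℕ) :=
  Finset.image (fun k : Fin ν → Fin (M + 1) => fun μ => (k μ : ℕ)) Finset.univ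

/-- The partial-sum operators `f ↦ ψ(x) Σ_{|k|≤M} ∫ f(γ_t(x)) ς_k^{(2^k)}(t) dt`. -/
def partialOp (e : Fin N → Fin ν → ℝ) (γ : Euc N → Euc n → Euc n) (ψ : Euc n → ℝ)
    (ς : (Fin ν → ℕ) → Euc N → ℝ) (M : ℕ) (f : Euc n → ℝ) : Euc n → ℝ :=
  fun x => ψ x * ∑ k ∈ trunc ν M, ∫ t : Euc N, f (γ t x) * scaled e (ς k) (twoPow k) t

/-- `T` is bounded on `L^p`: the partial-sum operators are bounded uniformly in `M`. -/
def OpBounded (p : ℝ) (e : Fin N → Fin ν → ℝ) (γ : Euc N → Euc n → Euc n)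
    (ψ : Euc n → ℝ) (ς : (Fin ν → ℕ) → Euc N → ℝ) : Prop :=
  ∃ C : ℝ≥0, ∀ M : ℕ, ∀ f : Euc n → ℝ, ContDiff ℝ (⊤ : ℕ∞) f → HasCompactSupport f →
    eLpNorm (partialOp e γ ψ ς M f) (ENNReal.ofReal p) volume ≤
      C * eLpNorm f (ENNReal.ofReal p) volume

/-- All operators with small `ψ` and small kernels in `𝒦(N,e,a,ν)` are `L^p` bounded. -/
def AllOpsBounded (p : ℝ) (e : Fin N → Fin ν → ℝ) (γ : Euc N → Euc n → Euc n) : Prop :=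
  ∃ ε a : ℝ, 0 < ε ∧ 0 < a ∧
    ∀ ψ : Euc n → ℝ, ContDiff ℝ (⊤ : ℕ∞) ψ → HasCompactSupport ψ →
      tsupport ψ ⊆ ball (0 : Euc n) ε →
      ∀ ς : (Fin ν → ℕ) → Euc N → ℝ, IsKernelSeq e a ς → OpBounded p e γ ψ ς

/-! ### Vector fields, brackets, Carnot–Carathéodory geometry -/

/-- The Lie bracket of two vector fields. -/
def lieBracket (X Y : VF n) : VF n := fun x => fderiv ℝ Y x (X x) - fderiv ℝ X x (Y x)

/-- `ℒ(S)`: the smallest set of (vector field, degree) pairs containing `S` and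
closed under Lie brackets (adding degrees). -/
inductive LieGen (S : Set (VF n × Deg ν)) : VF n × Deg ν → Prop
  | base {P : VF n × Deg ν} : P ∈ S → LieGen S P
  | bracket {X Y : VF n} {d d' : Deg ν} : LieGen S (X, d) → LieGen S (Y, d') →
      LieGen S (lieBracket X Y, d + d')

def lieSpan (S : Set (VF n × Deg ν)) : Set (VF n × Deg ν) := {P | LieGen S P}

def unitCube (ν : ℕ) : Set (Fin ν → ℝ) := {δ | ∀ μ, 0 ≤ δ μ ∧ δ μ ≤ 1}

def vecConst (ν : ℕ) (ξ : ℝ) : Fin ν → ℝ := fun _ => ξ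

/-- `a` is a measurable control with `‖Σ_l |a_l|²‖_{L^∞[0,1]} < 1`. -/
def IsSubunit {ι : Type*} [Fintype ι] (a : ℝ → ι → ℝ) : Prop :=
  (∀ l, Measurable fun s => a s l) ∧
  ∃ c : ℝ, c < 1 ∧ ∀ᵐ s ∂(volume.restrict (Set.Icc (0 : ℝ) 1)), ∑ l, a s l ^ 2 ≤ c

/-- `g` is an absolutely continuous solution of `g' = Σ_l a_l δ^{d_l} X_l(g)`, `g(0)=x`,
in integral form. -/
def SolvesODE {ι : Type*} [Fintype ι] (X : ι → VF n) (d : ι → Deg ν) (δ : Fin ν → ℝ)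
    (a : ℝ → ι → ℝ) (x : Euc n) (g : ℝ → Euc n) : Prop :=
  g 0 = x ∧ ∀ u ∈ Set.Icc (0 : ℝ) 1,
    g u = x + ∫ s in (0 : ℝ)..u, ∑ l, a s l • dpow δ (d l) • X l (g s)

/-- The multi-parameter Carnot–Carathéodory ball `B_{(X,d)}(x,δ)` inside `Ω`. -/
def CCBall {ι : Type*} [Fintype ι] (X : ι → VF n) (d : ι → Deg ν) (Ω : Set (Euc n))
    (x : Euc n) (δ : Fin ν → ℝ) : Set (Euc n) :=
  {y | ∃ (g : ℝ → Euc n) (a : ℝ → ι → ℝ), IsSubunit a ∧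
      (∀ u ∈ Set.Icc (0 : ℝ) 1, g u ∈ Ω) ∧ SolvesODE X d δ a x g ∧ g 1 = y}

/-- `(X,d)` satisfies `𝒞(x,δ,Ω)`. -/
def SatC {ι : Type*} [Fintype ι] (X : ι → VF n) (d : ι → Deg ν) (x : Euc n)
    (δ : Fin ν → ℝ) (Ω : Set (Euc n)) : Prop :=
  ∀ a : ℝ → ι → ℝ, IsSubunit a →
    ∃ g : ℝ → Euc n, (∀ u ∈ Set.Icc (0 : ℝ) 1, g u ∈ Ω) ∧ SolvesODE X d δ a x g

/-- The derivation of a scalar function along a vector field. -/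
def derivAlong (Y : VF n) (f : Euc n → ℝ) : Euc n → ℝ := fun x => fderiv ℝ f x (Y x)

/-- `(δX)^α f`: iterated derivations indexed by the ordered multi-index `α`. -/
def derivList {ι : Type*} (X : ι → VF n) (w : ι → ℝ) (α : List ι) (f : Euc n → ℝ) :
    Euc n → ℝ :=
  α.foldr (fun l g => derivAlong (fun x => w l • X l x) g) f

/-- `(X,d)` controls `(X₀,d₀)` on `U` with parameter `ξ₁` (ambient `Ω`). -/
def ControlsOn {ι : Type*} [Fintype ι] (X : ι → VF n) (d : ι → Deg ν)
    (Ω U : Set (Euc n)) (ξ₁ : ℝ) (X₀ : VF n) (d₀ : Deg ν) : Prop :=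
  (∀ x ∈ U, SatC X d x (vecConst ν ξ₁) Ω) ∧
  ∃ c : Euc n → (Fin ν → ℝ) → ι → Euc n → ℝ,
    (∀ x ∈ U, ∀ δ ∈ unitCube ν, ∀ y ∈ CCBall X d Ω x (fun μ => ξ₁ * δ μ),
      dpow δ d₀ • X₀ y = ∑ l, c x δ l y • dpow δ (d l) • X l y) ∧
    (∀ x ∈ U, ∀ δ ∈ unitCube ν, ∀ l, ∀ α : List ι,
      ContinuousOn (derivList X (fun l' => dpow δ (d l')) α (c x δ l))
        (CCBall X d Ω x (fun μ => ξ₁ * δ μ))) ∧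
    (∀ m : ℕ, ∃ C : ℝ, ∀ x ∈ U, ∀ δ ∈ unitCube ν, ∀ l, ∀ α : List ι, α.length ≤ m →
      ∀ y ∈ CCBall X d Ω x (fun μ => ξ₁ * δ μ),
        |derivList X (fun l' => dpow δ (d l')) α (c x δ l) y| ≤ C)

/-- `(X,d)` controls `(X₀,d₀)` (some `U`, `ξ₁`), ambient `Ω`. -/
def ControlsPair {ι : Type*} [Fintype ι] (X : ι → VF n) (d : ι → Deg ν)
    (Ω : Set (Euc n)) (X₀ : VF n) (d₀ : Deg ν) : Prop :=
  ∃ (U : Set (Euc n)) (ξ₁ : ℝ), IsOpen U ∧ (0 : Euc n) ∈ U ∧ U ⊆ Ω ∧ 0 < ξ₁ ∧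
    ControlsOn X d Ω U ξ₁ X₀ d₀

/-- A finite set of pairs controls a pair (ambient neighborhood existentially quantified). -/
def FinsetControls (F : Finset (VF n × Deg ν)) (P : VF n × Deg ν) : Prop :=
  ∃ Ω : Set (Euc n), IsOpen Ω ∧ (0 : Euc n) ∈ Ω ∧
    ControlsPair (fun l : F => (l : VF n × Deg ν).1) (fun l : F => (l : VF n × Deg ν).2)
      Ω P.1 P.2

/-- A set `S` of pairs controls a set `T`. -/
def SetControls (S T : Set (VF n × Deg ν)) : Prop :=
  ∃ F : Finset (VF n × Deg ν), ↑F ⊆ S ∧ ∀ P ∈ S ∪ T, FinsetControls F P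

/-! ### Degrees, Taylor coefficients, exponential coefficients -/

def degMulti (e : Fin N → Fin ν → ℝ) (α : Fin N → ℕ) : Fin ν → ℝ :=
  fun μ => ∑ i, (α i : ℝ) * e i μ

/-- A degree is pure if it has exactly one nonzero coordinate. -/
def IsPureDeg (dg : Fin ν → ℝ) : Prop := ∃! μ, dg μ ≠ 0

/-- `t^α`. -/
def monomial (α : Fin N → ℕ) (t : Euc N) : ℝ := ∏ i, t i ^ α i

/-- The multi-indices `α` with `|α| < M`. -/
def multiIdxLt (N M : ℕ) : Finset (Fin N → ℕ) :=
  (trunc N M).filter fun α => ∑ i, α i < M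

/-- `X` is the family of Taylor coefficient vector fields of `W` at `t = 0`, on `U`. -/
def IsTaylorFieldOf (W : Euc N → Euc n → Euc n) (U : Set (Euc n))
    (X : (Fin N → ℕ) → VF n) : Prop :=
  X 0 = 0 ∧ (∀ α, ContDiffOn ℝ (⊤ : ℕ∞) (X α) U) ∧
  ∀ M : ℕ, ∃ C ε : ℝ, 0 < ε ∧ ∀ t ∈ ball (0 : Euc N) ε, ∀ x ∈ U,
    ‖W t x - ∑ α ∈ multiIdxLt N M, monomial α t • X α x‖ ≤ C * ‖t‖ ^ M

/-- `W(t,x) = (d/dε)|_{ε=1} γ_{εt}(γ_t⁻¹(x))` on `B^N(ρ) × U`. -/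
def IsWFor (γ : Euc N → Euc n → Euc n) (ρ : ℝ) (U : Set (Euc n))
    (W : Euc N → Euc n → Euc n) : Prop :=
  ∃ γinv : Euc N → Euc n → Euc n,
    (∀ t ∈ ball (0 : Euc N) ρ, ∀ x ∈ U, γ t (γinv t x) = x ∧ γinv t (γ t x) = x) ∧
    ∀ t ∈ ball (0 : Euc N) ρ, ∀ x ∈ U,
      HasDerivAt (fun ε : ℝ => γ (ε • t) (γinv t x)) (W t x) 1

/-- `y` is the time-one flow of the vector field `V` from `x`. -/
def FlowsTo (V : VF n) (x y : Euc n) : Prop :=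
  ∃ φ : ℝ → Euc n, φ 0 = x ∧ φ 1 = y ∧ ∀ s ∈ Set.Icc (0 : ℝ) 1, HasDerivAt φ (V (φ s)) s

/-- `Xh` is the family of exponential coefficient vector fields of `γ`:
`γ_t(x) = e^{Σ_{0<|α|<M} t^α X̂_α} x + O(|t|^M)` for every `M`. -/
def IsExpFieldsFor (γ : Euc N → Euc n → Euc n) (U : Set (Euc n))
    (Xh : (Fin N → ℕ) → VF n) : Prop :=
  Xh 0 = 0 ∧ (∀ α, ContDiffOn ℝ (⊤ : ℕ∞) (Xh α) U) ∧
  ∀ M : ℕ, ∃ C ε : ℝ, 0 < ε ∧ ∀ t ∈ ball (0 : Euc N) ε, ∀ x ∈ U,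
    ∃ y : Euc n, FlowsTo (fun z => ∑ α ∈ multiIdxLt N M, monomial α t • Xh α z) x y ∧
      ‖γ t x - y‖ ≤ C * ‖t‖ ^ M

/-- The pure power set `𝒫` of a family of coefficient fields. -/
def pureSet (e : Fin N → Fin ν → ℝ) (X : (Fin N → ℕ) → VF n) : Set (VF n × Deg ν) :=
  {P | ∃ α : Fin N → ℕ, α ≠ 0 ∧ IsPureDeg (degMulti e α) ∧ P = (X α, degMulti e α)}

/-- The nonpure power set `𝒩` of a family of coefficient fields. -/
def nonpureSet (e : Fin N → Fin ν → ℝ) (X : (Fin N → ℕ) → VF n) : Set (VF n × Deg ν) :=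
  {P | ∃ α : Fin N → ℕ, α ≠ 0 ∧ ¬ IsPureDeg (degMulti e α) ∧ P = (X α, degMulti e α)}

/-! ### Strong control -/

/-- `(X,d)` strongly controls `(X₀,d₀)`. -/
def StrongControlsOn {ι : Type*} [Fintype ι] (X : ι → VF n) (d : ι → Deg ν)
    (X₀ : VF n) (d₀ : Deg ν) : Prop :=
  ∃ (U V : Set (Euc n)) (c : ι → Euc n → ℝ),
    IsOpen U ∧ (0 : Euc n) ∈ U ∧ IsOpen V ∧ closure U ⊆ V ∧
    (∀ l, ContDiffOn ℝ (⊤ : ℕ∞) (c l) V) ∧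
    (∀ l, ¬ (∀ μ, d l μ ≤ d₀ μ) → c l = 0) ∧
    (∀ x ∈ U, X₀ x = ∑ l, c l x • X l x)

/-- A finite set of pairs strongly controls a pair. -/
def FinsetStrongControls (F : Finset (VF n × Deg ν)) (P : VF n × Deg ν) : Prop :=
  StrongControlsOn (fun l : F => (l : VF n × Deg ν).1) (fun l : F => (l : VF n × Deg ν).2)
    P.1 P.2

/-- `(X,d)` strongly controls `W(t,x)`. -/
def StrongControlsW {ι : Type*} [Fintype ι] (X : ι → VF n) (d : ι → Deg ν)
    (e : Fin N → Fin ν → ℝ) (W : Euc N → Euc n → Euc n) : Prop :=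
  ∃ (ρ' : ℝ) (U : Set (Euc n)) (V : Set (Euc N × Euc n)) (A : Finset (Fin N → ℕ))
    (c : ι → (Fin N → ℕ) → Euc N → Euc n → ℝ),
    0 < ρ' ∧ IsOpen U ∧ (0 : Euc n) ∈ U ∧ IsOpen V ∧
    closure (ball (0 : Euc N) ρ' ×ˢ U) ⊆ V ∧
    (∀ l α, ContDiffOn ℝ (⊤ : ℕ∞) (fun p : Euc N × Euc n => c l α p.1 p.2) V) ∧
    (∀ l α, degMulti e α ≠ d l → c l α = 0) ∧
    (∀ t ∈ ball (0 : Euc N) ρ', ∀ x ∈ U,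
      W t x = ∑ l, ∑ α ∈ A, (c l α t x * monomial α t) • X l x)

/-- A finite set of pairs strongly controls `W`. -/
def FinsetStrongControlsW (F : Finset (VF n × Deg ν)) (e : Fin N → Fin ν → ℝ)
    (W : Euc N → Euc n → Euc n) : Prop :=
  StrongControlsW (fun l : F => (l : VF n × Deg ν).1) (fun l : F => (l : VF n × Deg ν).2)
    e W

/-! ### Control of `W` -/

/-- `∂_{t_i}` applied to a function of `(t,u)`. -/
def derivTAlong (i : Fin N) (f : Euc N → Euc n → ℝ) : Euc N → Euc n → ℝ :=
  fun t u => fderiv ℝ (fun s => f s u) t (EuclideanSpace.single i (1 : ℝ))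

/-- Iterated `t`-partials indexed by an ordered multi-index. -/
def derivTList (β : List (Fin N)) (f : Euc N → Euc n → ℝ) : Euc N → Euc n → ℝ :=
  β.foldr derivTAlong f

/-- Iterated `u`-derivations along scaled vector fields. -/
def derivUList {ι : Type*} (X : ι → VF n) (w : ι → ℝ) (β : List ι)
    (f : Euc N → Euc n → ℝ) : Euc N → Euc n → ℝ :=
  fun t => derivList X w β (f t)

/-- `(X,d)` controls `W` on `U` for `t ∈ B^N(ρ')` with parameter `ξ₁` (ambient `Ω`). -/
def ControlsWOn {ι : Type*} [Fintype ι] (X : ι → VF n) (d : ι → Deg ν)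
    (e : Fin N → Fin ν → ℝ) (Ω U : Set (Euc n)) (ρ' ξ₁ : ℝ)
    (W : Euc N → Euc n → Euc n) : Prop :=
  (∀ x ∈ U, SatC X d x (vecConst ν ξ₁) Ω) ∧
  ∃ c : Euc n → (Fin ν → ℝ) → ι → Euc N → Euc n → ℝ,
    (∀ x ∈ U, ∀ δ ∈ unitCube ν, ∀ t ∈ ball (0 : Euc N) ρ',
      ∀ u ∈ CCBall X d Ω x (fun μ => ξ₁ * δ μ),
        W (dilate e δ t) u = ∑ l, c x δ l t u • dpow δ (d l) • X l u) ∧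
    (∀ x ∈ U, ∀ δ ∈ unitCube ν, ∀ l, ∀ β' : List (Fin N), ∀ β : List ι,
      ContinuousOn
        (fun p : Euc N × Euc n =>
          derivTList β' (derivUList X (fun l' => dpow δ (d l')) β (c x δ l)) p.1 p.2)
        (ball (0 : Euc N) ρ' ×ˢ CCBall X d Ω x (fun μ => ξ₁ * δ μ))) ∧
    (∀ m : ℕ, ∃ C : ℝ, ∀ x ∈ U, ∀ δ ∈ unitCube ν, ∀ l, ∀ β' : List (Fin N), ∀ β : List ι,
      β'.length + β.length ≤ m → ∀ t ∈ ball (0 : Euc N) ρ',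
        ∀ u ∈ CCBall X d Ω x (fun μ => ξ₁ * δ μ),
          |derivTList β' (derivUList X (fun l' => dpow δ (d l')) β (c x δ l)) t u| ≤ C)

/-- `(X,d)` controls `W` (some `ρ' ≤ ρ`, `ξ₁`, `U`), ambient `Ω`. -/
def ControlsW {ι : Type*} [Fintype ι] (X : ι → VF n) (d : ι → Deg ν)
    (e : Fin N → Fin ν → ℝ) (Ω : Set (Euc n)) (ρ : ℝ)
    (W : Euc N → Euc n → Euc n) : Prop :=
  ∃ (ρ' ξ₁ : ℝ) (U : Set (Euc n)), 0 < ρ' ∧ ρ' ≤ ρ ∧ 0 < ξ₁ ∧ IsOpen U ∧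
    (0 : Euc n) ∈ U ∧ U ⊆ Ω ∧ ControlsWOn X d e Ω U ρ' ξ₁ W

end Zhang

/-!
Small Carnot–Carathéodory balls stay in a fixed compact set on which all the data are smooth:
because the degrees `d_l` are nonzero, the weights `(ξδ)^{d_l}` are uniformly small when `ξ` is,
so Picard iteration produces the integral curves and they have no time to leave.

Strong control provides smooth coefficients. For a vector field they are `δ^{d₀-d_l} c_l`; for `W`
they are `∑_α c_{l,α}(δt,u) t^α`, because `(δt)^α = δ^{d_l} t^α` when `deg α = d_l`. In both cases
`δ` enters the coefficients and the derivations `δ^{d_l} X_l` only through finitely many powers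
of `δ`, all lying in `[0,1]`, on which everything depends smoothly. With these powers adjoined as
extra variables, the bounds uniform in `x` and `δ` are bounds of continuous functions on a
compact set.
-/

namespace Zhang

section ParametricDerivatives

variable {N n : ℕ} {ι P : Type*} [NormedAddCommGroup P] [NormedSpace ℝ P]

theorem contDiffAt_derivAlong {Y : P → VF n} {f : P → Euc n → ℝ} {z : P × Euc n}
    (hY : ContDiffAt ℝ (⊤ : ℕ∞) (fun z : P × Euc n => Y z.1 z.2) z)
    (hf : ContDiffAt ℝ (⊤ : ℕ∞) (fun z : P × Euc n => f z.1 z.2) z) :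
    ContDiffAt ℝ (⊤ : ℕ∞) (fun z : P × Euc n => derivAlong (Y z.1) (f z.1) z.2) z := by
  have hf' : ContDiffAt ℝ (⊤ : ℕ∞)
      (Function.uncurry fun (z : P × Euc n) (u : Euc n) => f z.1 u) (z, z.2) :=
    hf.comp (z, z.2) (f := fun p : (P × Euc n) × Euc n => (p.1.1, p.2)) (by fun_prop)
  exact (hf'.fderiv contDiffAt_snd (by simp)).clm_apply hY

theorem contDiffAt_derivTAlong {F : P → Euc N → Euc n → ℝ} {z : (P × Euc N) × Euc n}
    (hF : ContDiffAt ℝ (⊤ : ℕ∞) (fun z : (P × Euc N) × Euc n => F z.1.1 z.1.2 z.2) z)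
    (i : Fin N) :
    ContDiffAt ℝ (⊤ : ℕ∞)
      (fun z : (P × Euc N) × Euc n => derivTAlong i (F z.1.1) z.1.2 z.2) z := by
  have hF' : ContDiffAt ℝ (⊤ : ℕ∞)
      (Function.uncurry fun (z : (P × Euc N) × Euc n) (s : Euc N) => F z.1.1 s z.2)
      (z, z.1.2) :=
    hF.comp (z, z.1.2)
      (f := fun p : ((P × Euc N) × Euc n) × Euc N => ((p.1.1.1, p.2), p.1.2)) (by fun_prop)
  exact (hF'.fderiv (by fun_prop) (by simp)).clm_apply contDiffAt_const

theorem contDiffAt_derivList {X : ι → VF n} {w : P → ι → ℝ} {f : P → Euc n → ℝ}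
    {z : P × Euc n} (hX : ∀ l, ContDiffAt ℝ (⊤ : ℕ∞) (X l) z.2)
    (hw : ∀ l, ContDiffAt ℝ (⊤ : ℕ∞) (fun p => w p l) z.1)
    (hf : ContDiffAt ℝ (⊤ : ℕ∞) (fun z : P × Euc n => f z.1 z.2) z) (α : List ι) :
    ContDiffAt ℝ (⊤ : ℕ∞) (fun z : P × Euc n => derivList X (w z.1) α (f z.1) z.2) z := by
  induction α with
  | nil => exact hf
  | cons l α ih =>
    exact contDiffAt_derivAlong (Y := fun p u => w p l • X l u)
      (f := fun p => derivList X (w p) α (f p))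
      (((hw l).comp z contDiffAt_fst).smul ((hX l).comp z contDiffAt_snd)) ih

theorem contDiffAt_derivTList_derivUList {X : ι → VF n} {w : P → ι → ℝ}
    {F : P → Euc N → Euc n → ℝ} {z : (P × Euc N) × Euc n}
    (hX : ∀ l, ContDiffAt ℝ (⊤ : ℕ∞) (X l) z.2)
    (hw : ∀ l, ContDiffAt ℝ (⊤ : ℕ∞) (fun p => w p l) z.1.1)
    (hF : ContDiffAt ℝ (⊤ : ℕ∞) (fun z : (P × Euc N) × Euc n => F z.1.1 z.1.2 z.2) z)
    (β' : List (Fin N)) (β : List ι) :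
    ContDiffAt ℝ (⊤ : ℕ∞) (fun z : (P × Euc N) × Euc n =>
      derivTList β' (derivUList X (w z.1.1) β (F z.1.1)) z.1.2 z.2) z := by
  induction β' with
  | nil =>
    exact contDiffAt_derivList (w := fun p : P × Euc N => w p.1)
      (f := fun p : P × Euc N => F p.1 p.2) hX
      (fun l => (hw l).comp z.1 contDiffAt_fst) hF β
  | cons i β' ih =>
    exact contDiffAt_derivTAlong
      (F := fun p => derivTList β' (derivUList X (w p) β (F p))) ih i

end ParametricDerivatives

section Caratheodory

variable {E : Type*} [NormedAddCommGroup E]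

/-- The Carathéodory conditions, in global form, for a time-dependent field on `[0,1]`: it is
measurable in time along continuous curves and, for almost every time, bounded by `M` and
`K`-Lipschitz in space. They make the integral equation of the field solvable. -/
structure IsCaratheodory (f : ℝ → E → E) (M : ℝ) (K : ℝ≥0) : Prop where
  aestronglyMeasurable : ∀ g : ℝ → E, Continuous g →
    AEStronglyMeasurable (fun s => f s (g s)) (volume.restrict (Icc (0 : ℝ) 1))
  norm_le : ∀ᵐ s ∂(volume.restrict (Icc (0 : ℝ) 1)), ∀ y, ‖f s y‖ ≤ M
  lipschitzWith : ∀ᵐ s ∂(volume.restrict (Icc (0 : ℝ) 1)), LipschitzWith K (f s)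

variable {f : ℝ → E → E} {M : ℝ} {K : ℝ≥0}

theorem IsCaratheodory.integrableOn (hf : IsCaratheodory f M K) {g : ℝ → E}
    (hg : Continuous g) : IntegrableOn (fun s => f s (g s)) (Icc (0 : ℝ) 1) :=
  Integrable.of_bound (hf.aestronglyMeasurable g hg) M (hf.norm_le.mono fun _ hs => hs _)

variable [NormedSpace ℝ E]

theorem continuousOn_add_intervalIntegral {φ : ℝ → E} {a b : ℝ} (hab : a ≤ b)
    (hφ : IntegrableOn φ (Icc a b)) (x : E) :
    ContinuousOn (fun u => x + ∫ s in a..u, φ s) (Icc a b) := by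
  rw [← uIcc_of_le hab] at hφ ⊢
  exact continuousOn_const.add (intervalIntegral.continuousOn_primitive_interval hφ)

theorem IsCaratheodory.dist_picard_le (hf : IsCaratheodory f M K) (x : E) {g h : ℝ → E}
    (hg : Continuous g) (hh : Continuous h) {D : ℝ} (hD : ∀ s, dist (g s) (h s) ≤ D) {u : ℝ}
    (hu : u ∈ Icc (0 : ℝ) 1) :
    dist (ODE.picard f 0 x g u) (ODE.picard f 0 x h u) ≤ K * D := by
  have hint {γ : ℝ → E} (hγ : Continuous γ) :
      IntervalIntegrable (fun s => f s (γ s)) volume 0 u :=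
    (intervalIntegrable_iff_integrableOn_Icc_of_le hu.1).2
      ((hf.integrableOn hγ).mono_set (Icc_subset_Icc_right hu.2))
  have hD0 : 0 ≤ D := dist_nonneg.trans (hD 0)
  have hle : ∀ᵐ s, s ∈ uIoc 0 u → ‖f s (g s) - f s (h s)‖ ≤ K * D := by
    filter_upwards [(ae_restrict_iff' measurableSet_Icc).1 hf.lipschitzWith] with s hs hsu
    rw [uIoc_of_le hu.1] at hsu
    rw [← dist_eq_norm]
    exact ((hs ⟨hsu.1.le, hsu.2.trans hu.2⟩).dist_le_mul _ _).trans
      (mul_le_mul_of_nonneg_left (hD s) K.2)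
  calc dist (ODE.picard f 0 x g u) (ODE.picard f 0 x h u)
      = ‖∫ s in (0 : ℝ)..u, (f s (g s) - f s (h s))‖ := by
        rw [ODE.picard_apply, ODE.picard_apply, dist_add_left, dist_eq_norm,
          intervalIntegral.integral_sub (hint hg) (hint hh)]
    _ ≤ K * D * |u - 0| := intervalIntegral.norm_integral_le_of_norm_le_const_ae hle
    _ ≤ K * D := by
        rw [sub_zero, abs_of_nonneg hu.1]
        exact mul_le_of_le_one_right (by positivity) hu.2

theorem IsCaratheodory.exists_eq_picard [CompleteSpace E] (hf : IsCaratheodory f M K)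
    (hK : K < 1) (x : E) :
    ∃ g : ℝ → E, ∀ u ∈ Icc (0 : ℝ) 1, g u = ODE.picard f 0 x g u := by
  let ext (γ : C(Icc (0 : ℝ) 1, E)) : ℝ → E := IccExtend zero_le_one γ
  have hext γ : Continuous (ext γ) := γ.continuous.Icc_extend'
  let Φ (γ : C(Icc (0 : ℝ) 1, E)) : C(Icc (0 : ℝ) 1, E) :=
    ⟨fun u => ODE.picard f 0 x (ext γ) u, continuousOn_iff_continuous_domRestrict.1
      (continuousOn_add_intervalIntegral zero_le_one (hf.integrableOn (hext γ)) x)⟩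
  have hΦ : ContractingWith K Φ := by
    refine ⟨hK, LipschitzWith.of_dist_le_mul fun γ η => ?_⟩
    refine (ContinuousMap.dist_le (by positivity)).2 fun u => ?_
    exact hf.dist_picard_le x (hext γ) (hext η)
      (fun s => ContinuousMap.dist_apply_le_dist _) u.2
  obtain ⟨γ, hγ⟩ : ∃ γ, Φ γ = γ := ⟨_, hΦ.fixedPoint_isFixedPt⟩
  refine ⟨ext γ, fun u hu => ?_⟩
  calc ext γ u = γ ⟨u, hu⟩ := IccExtend_of_mem zero_le_one _ hu
    _ = Φ γ ⟨u, hu⟩ := by rw [hγ]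
    _ = ODE.picard f 0 x (ext γ) u := rfl

theorem exists_first_time_ge {φ : ℝ → ℝ} {a b r : ℝ} (hab : a ≤ b)
    (hφ : ContinuousOn φ (Icc a b)) (hr : r ≤ φ b) :
    ∃ v ∈ Icc a b, r ≤ φ v ∧ ∀ s ∈ Ico a v, φ s < r := by
  have hcompact : IsCompact (Icc a b ∩ φ ⁻¹' Ici r) :=
    isCompact_Icc.of_isClosed_subset
      (hφ.preimage_isClosed_of_isClosed isClosed_Icc isClosed_Ici) inter_subset_left
  obtain ⟨v, ⟨hv, hrv⟩, hmin⟩ := hcompact.exists_isLeast ⟨b, right_mem_Icc.2 hab, hr⟩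
  refine ⟨v, hv, hrv, fun s hs => ?_⟩
  by_contra! hrs
  exact hs.2.not_ge (hmin ⟨⟨hs.1, hs.2.le.trans hv.2⟩, hrs⟩)

/-- Where `f` fails to be integrable, the integral is `0` by convention and `g u = x`. -/
theorem mem_closedBall_of_eq_add_integral {f g : ℝ → E} {x : E} {r M : ℝ} (hr : 0 < r)
    (hMr : M < r) (hg : ∀ u ∈ Icc (0 : ℝ) 1, g u = x + ∫ s in (0 : ℝ)..u, f s)
    (hf : ∀ᵐ s ∂(volume.restrict (Icc (0 : ℝ) 1)), g s ∈ closedBall x r → ‖f s‖ ≤ M)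
    {u : ℝ} (hu : u ∈ Icc (0 : ℝ) 1) : g u ∈ closedBall x r := by
  by_contra! hgu
  have hint : IntegrableOn f (Icc 0 u) := by
    by_contra hni
    rw [← intervalIntegrable_iff_integrableOn_Icc_of_le hu.1] at hni
    rw [hg u hu, intervalIntegral.integral_undef hni, add_zero] at hgu
    exact hgu (mem_closedBall_self hr.le)
  have hcont : ContinuousOn g (Icc 0 u) :=
    (continuousOn_add_intervalIntegral hu.1 hint x).congr fun v hv =>
      hg v ⟨hv.1, hv.2.trans hu.2⟩
  have hdist : ContinuousOn (fun s => dist (g s) x) (Icc 0 u) :=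
    (continuous_id.dist continuous_const).comp_continuousOn hcont
  obtain ⟨v, hv, hrv, hbefore⟩ := exists_first_time_ge hu.1 hdist (not_le.1 hgu).le
  have hv1 : v ∈ Icc (0 : ℝ) 1 := ⟨hv.1, hv.2.trans hu.2⟩
  have hfM : ∀ᵐ s, s ∈ uIoc 0 v → ‖f s‖ ≤ max M 0 := by
    filter_upwards [(ae_restrict_iff' measurableSet_Icc).1 hf,
      compl_mem_ae_iff.2 (measure_singleton v)] with s hs hsv hs0
    rw [uIoc_of_le hv.1] at hs0
    exact (hs ⟨hs0.1.le, hs0.2.trans hv1.2⟩ (hbefore s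
      ⟨hs0.1.le, lt_of_le_of_ne hs0.2 hsv⟩).le).trans (le_max_left _ _)
  have : dist (g v) x < r := calc
    dist (g v) x = ‖∫ s in (0 : ℝ)..v, f s‖ := by
      rw [hg v hv1, dist_eq_norm, add_sub_cancel_left]
    _ ≤ max M 0 * |v - 0| := intervalIntegral.norm_integral_le_of_norm_le_const_ae hfM
    _ ≤ max M 0 := by
      rw [sub_zero, abs_of_nonneg hv.1]
      exact mul_le_of_le_one_right (le_max_right _ _) hv1.2
    _ < r := max_lt hMr hr
  exact this.not_ge hrv

end Caratheodory

section SmoothCutoff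

variable {E F : Type*} [NormedAddCommGroup E] [NormedSpace ℝ E] [FiniteDimensional ℝ E]
  [NormedAddCommGroup F] [NormedSpace ℝ F] {x : E} {r R : ℝ}

theorem exists_contDiff_hasCompactSupport_eqOn_closedBall {m : ℕ∞} {f : E → F}
    (hr : 0 < r) (hrR : r < R) (hf : ∀ y ∈ closedBall x R, ContDiffAt ℝ m f y) :
    ∃ g : E → F, ContDiff ℝ m g ∧ HasCompactSupport g ∧ EqOn g f (closedBall x r) := by
  let χ : ContDiffBump x := ⟨r, R, hr, hrR⟩
  refine ⟨fun y => χ y • f y, contDiff_iff_contDiffAt.2 fun y => ?_,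
    χ.hasCompactSupport.smul_right, fun y hy => ?_⟩
  · by_cases hy : y ∈ tsupport χ
    · exact χ.contDiffAt.smul (hf y (χ.tsupport_eq ▸ hy))
    · refine (contDiffAt_const (c := 0)).congr_of_eventuallyEq ?_
      filter_upwards [notMem_tsupport_iff_eventuallyEq.1 hy] with z hz
      rw [hz, Pi.zero_apply, zero_smul]
  · simp only [χ.one_of_mem_closedBall hy, one_smul]

theorem exists_bounded_lipschitz_eqOn_closedBall {ι : Type*} [Finite ι]
    {X : ι → E → F} (hr : 0 < r) (hrR : r < R)
    (hX : ∀ l, ∀ y ∈ closedBall x R, ContDiffAt ℝ 1 (X l) y) :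
    ∃ (Y : ι → E → F) (M : ℝ) (K : ℝ≥0), (∀ l, EqOn (Y l) (X l) (closedBall x r)) ∧
      (∀ l y, ‖Y l y‖ ≤ M) ∧ ∀ l, LipschitzWith K (Y l) := by
  cases nonempty_fintype ι
  obtain ⟨g, hg, hgc, hgX⟩ := exists_contDiff_hasCompactSupport_eqOn_closedBall
    (m := 1) (f := fun y l => X l y) hr hrR fun y hy => contDiffAt_pi.2 fun l => hX l y hy
  obtain ⟨M, hM⟩ := hgc.exists_bound_of_continuous hg.continuous
  obtain ⟨K, hK⟩ := hg.lipschitzWith_of_hasCompactSupport hgc one_ne_zero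
  exact ⟨fun l y => g y l, M, K, fun l y hy => congrFun (hgX hy) l,
    fun l y => (norm_le_pi_norm (g y) l).trans (hM y),
    fun l => LipschitzWith.of_dist_le_mul fun y z =>
      (dist_le_pi_dist (g y) (g z) l).trans (hK.dist_le_mul y z)⟩

end SmoothCutoff

section Dilations

variable {N ν : ℕ} {δ : Fin ν → ℝ}

theorem dpow_nonneg (hδ : ∀ μ, 0 ≤ δ μ) (d : Deg ν) : 0 ≤ dpow δ d :=
  Finset.prod_nonneg fun μ _ => Real.rpow_nonneg (hδ μ) _

theorem dpow_mem_Icc (hδ : δ ∈ unitCube ν) {d : Deg ν} (hd : ∀ μ, 0 ≤ d μ) :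
    dpow δ d ∈ Icc (0 : ℝ) 1 :=
  ⟨dpow_nonneg (fun μ => (hδ μ).1) d,
    Finset.prod_le_one (fun μ _ => Real.rpow_nonneg (hδ μ).1 _)
      fun μ _ => Real.rpow_le_one (hδ μ).1 (hδ μ).2 (hd μ)⟩

theorem dpow_comp_mem_Icc {κ : Type*} (hδ : δ ∈ unitCube ν) {d : κ → Deg ν}
    (hd : ∀ k μ, 0 ≤ d k μ) : (fun k => dpow δ (d k)) ∈ Icc (0 : κ → ℝ) 1 :=
  ⟨fun k => (dpow_mem_Icc hδ (hd k)).1, fun k => (dpow_mem_Icc hδ (hd k)).2⟩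

theorem dpow_sub_mul_dpow (hδ : ∀ μ, 0 ≤ δ μ) {d d₀ : Deg ν} (hd : ∀ μ, 0 ≤ d μ)
    (hle : ∀ μ, d μ ≤ d₀ μ) : dpow δ (d₀ - d) * dpow δ d = dpow δ d₀ := by
  rw [dpow, dpow, dpow, ← Finset.prod_mul_distrib]
  refine Finset.prod_congr rfl fun μ _ => ?_
  rw [Pi.sub_apply, ← Real.rpow_add_of_nonneg (hδ μ) (sub_nonneg.2 (hle μ)) (hd μ),
    sub_add_cancel]

theorem dpow_degMulti (hδ : ∀ μ, 0 ≤ δ μ) {e : Fin N → Fin ν → ℝ} (he : ∀ i μ, 0 ≤ e i μ)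
    (α : Fin N → ℕ) : dpow δ (degMulti e α) = ∏ i, dpow δ (e i) ^ α i := by
  simp only [dpow, degMulti, ← Finset.prod_pow]
  rw [Finset.prod_comm]
  refine Finset.prod_congr rfl fun μ _ => ?_
  rw [Real.rpow_sum_of_nonneg (hδ μ) fun i _ => mul_nonneg (Nat.cast_nonneg _) (he i μ)]
  refine Finset.prod_congr rfl fun i _ => ?_
  rw [mul_comm, Real.rpow_mul (hδ μ), Real.rpow_natCast]

theorem monomial_dilate (hδ : ∀ μ, 0 ≤ δ μ) {e : Fin N → Fin ν → ℝ} (he : ∀ i μ, 0 ≤ e i μ)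
    (α : Fin N → ℕ) (t : Euc N) :
    monomial α (dilate e δ t) = dpow δ (degMulti e α) * monomial α t := by
  rw [dpow_degMulti hδ he, monomial, monomial, ← Finset.prod_mul_distrib]
  exact Finset.prod_congr rfl fun i _ => mul_pow _ _ _

theorem contDiff_monomial (α : Fin N → ℕ) : ContDiff ℝ (⊤ : ℕ∞) (monomial α) := by
  unfold monomial
  fun_prop

theorem dpow_const_mul_le (hδ : δ ∈ unitCube ν) {d : Deg ν} (hd : ∀ μ, 0 ≤ d μ) {ξ : ℝ}
    (hξ : 0 ≤ ξ) : dpow (fun μ => ξ * δ μ) d ≤ dpow (vecConst ν ξ) d :=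
  Finset.prod_le_prod (fun μ _ => Real.rpow_nonneg (mul_nonneg hξ (hδ μ).1) _) fun μ _ =>
    Real.rpow_le_rpow (mul_nonneg hξ (hδ μ).1) (mul_le_of_le_one_right hξ (hδ μ).2) (hd μ)

theorem exists_pos_dpow_vecConst_le {ι : Type*} [Finite ι] {d : ι → Deg ν}
    (hd : ∀ l, (∀ μ, 0 ≤ d l μ) ∧ d l ≠ 0) {η : ℝ} (hη : 0 < η) :
    ∃ ξ : ℝ, 0 < ξ ∧ ∀ l, dpow (vecConst ν ξ) (d l) ≤ η := by
  have hev : ∀ᶠ ξ : ℝ in 𝓝[>] 0, ∀ l, dpow (vecConst ν ξ) (d l) < η := by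
    refine eventually_all.2 fun l => ?_
    have hcont : Continuous fun ξ : ℝ => dpow (vecConst ν ξ) (d l) :=
      continuous_finsetProd _ fun μ _ => Real.continuous_rpow_const ((hd l).1 μ)
    obtain ⟨μ, hμ⟩ := Function.ne_iff.1 (hd l).2
    have hzero : dpow (vecConst ν 0) (d l) = 0 :=
      Finset.prod_eq_zero (Finset.mem_univ μ) (Real.zero_rpow hμ)
    exact nhdsWithin_le_nhds (hcont.tendsto 0 |>.eventually_lt_const (by rwa [hzero]))
  obtain ⟨ξ, hξ, hpos⟩ := (hev.and self_mem_nhdsWithin).exists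
  exact ⟨ξ, hpos, fun l => (hξ l).le⟩

/-- Coordinatewise multiplication `(s_1 t_1, …, s_N t_N)`. The dilation `dilate e δ` is
`coordMul s` with `s_i = δ^{e_i}`; unlike `dilate`, which involves real powers of `δ`,
`coordMul` is smooth in all its arguments. -/
def coordMul (s : Fin N → ℝ) (t : Euc N) : Euc N :=
  (EuclideanSpace.equiv (Fin N) ℝ).symm fun i => s i * t i

theorem dilate_eq_coordMul (e : Fin N → Fin ν → ℝ) (δ : Fin ν → ℝ) (t : Euc N) :
    dilate e δ t = coordMul (fun i => dpow δ (e i)) t :=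
  rfl

theorem contDiff_coordMul :
    ContDiff ℝ (⊤ : ℕ∞) fun z : (Fin N → ℝ) × Euc N => coordMul z.1 z.2 :=
  (EuclideanSpace.equiv (Fin N) ℝ).symm.contDiff.comp (contDiff_pi.2 fun i => by fun_prop)

theorem norm_coordMul_le {s : Fin N → ℝ} (hs : s ∈ Icc (0 : Fin N → ℝ) 1) (t : Euc N) :
    ‖coordMul s t‖ ≤ ‖t‖ := by
  rw [EuclideanSpace.norm_eq, EuclideanSpace.norm_eq]
  refine Real.sqrt_le_sqrt (Finset.sum_le_sum fun i _ => ?_)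
  have h : ‖s i * t i‖ ≤ ‖t i‖ := by
    rw [norm_mul, Real.norm_of_nonneg (hs.1 i)]
    exact mul_le_of_le_one_left (norm_nonneg _) (hs.2 i)
  exact pow_le_pow_left₀ (norm_nonneg _) h 2

end Dilations

section CarnotCaratheodory

theorem ball_subset_closedBall_two_mul {E : Type*} [PseudoMetricSpace E] {p : E} {r : ℝ} :
    ball p r ⊆ closedBall p (2 * r) := fun x hx => by
  rw [mem_ball] at hx
  rw [mem_closedBall]
  linarith [dist_nonneg (x := x) (y := p)]

theorem exists_pos_mul_mul_lt (m M K : ℝ) {r s : ℝ} (hr : 0 < r) (hs : 0 < s) :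
    ∃ η : ℝ, 0 < η ∧ m * (η * M) < r ∧ m * (η * K) < s := by
  have hlt (L b : ℝ) (hb : 0 < b) : ∀ᶠ η : ℝ in 𝓝[>] 0, m * (η * L) < b :=
    nhdsWithin_le_nhds (Tendsto.eventually_lt_const hb
      (Continuous.tendsto' (by fun_prop) _ _ (by ring)))
  obtain ⟨η, hη, hpos⟩ := (((hlt M r hr).and (hlt K s hs)).and self_mem_nhdsWithin).exists
  exact ⟨η, hpos, hη⟩

variable {ν n : ℕ} {ι : Type*} [Fintype ι] {Ω U : Set (Euc n)} {X : ι → VF n} {d : ι → Deg ν}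

theorem IsSubunit.ae_abs_le_one {a : ℝ → ι → ℝ} (ha : IsSubunit a) :
    ∀ᵐ s ∂(volume.restrict (Icc (0 : ℝ) 1)), ∀ l, |a s l| ≤ 1 := by
  obtain ⟨-, c, hc, h⟩ := ha
  filter_upwards [h] with s hs l
  rw [← sq_le_one_iff_abs_le_one]
  exact (Finset.single_le_sum (f := fun l => a s l ^ 2) (fun i _ => sq_nonneg _)
    (Finset.mem_univ l)).trans (hs.trans hc.le)

theorem norm_sum_control_le {E : Type*} [SeminormedAddCommGroup E] [NormedSpace ℝ E] {η M : ℝ}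
    {b w : ι → ℝ} (hb : ∀ l, |b l| ≤ 1) (hw : ∀ l, w l ∈ Icc 0 η) {v : ι → E}
    (hv : ∀ l, ‖v l‖ ≤ M) :
    ‖∑ l, b l • w l • v l‖ ≤ Fintype.card ι * (η * M) := by
  have hterm (l : ι) : ‖b l • w l • v l‖ ≤ η * M := calc
    ‖b l • w l • v l‖ = |b l| * (w l * ‖v l‖) := by
      rw [norm_smul, norm_smul, Real.norm_eq_abs, Real.norm_of_nonneg (hw l).1]
    _ ≤ 1 * (w l * ‖v l‖) :=
      mul_le_mul_of_nonneg_right (hb l) (mul_nonneg (hw l).1 (norm_nonneg _))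
    _ = w l * ‖v l‖ := one_mul _
    _ ≤ η * M := mul_le_mul (hw l).2 (hv l) (norm_nonneg _) ((hw l).1.trans (hw l).2)
  calc ‖∑ l, b l • w l • v l‖ ≤ ∑ _l : ι, η * M := norm_sum_le_of_le _ fun l _ => hterm l
    _ = Fintype.card ι * (η * M) := by rw [Finset.sum_const, Finset.card_univ, nsmul_eq_mul]

/-- The controlled field `∑_l a_l(s) w_l X_l`, whose integral curves for the weights
`w_l = δ^{d_l}` define the Carnot–Carathéodory balls. -/
def controlField (X : ι → VF n) (w : ι → ℝ) (a : ℝ → ι → ℝ) (s : ℝ) : VF n :=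
  fun y => ∑ l, a s l • w l • X l y

theorem isCaratheodory_controlField {M η : ℝ} {K L : ℝ≥0} {w : ι → ℝ} {a : ℝ → ι → ℝ}
    (hM : ∀ l y, ‖X l y‖ ≤ M) (hK : ∀ l, LipschitzWith K (X l)) (ha : IsSubunit a)
    (hw : ∀ l, w l ∈ Icc 0 η) (hL : Fintype.card ι * (η * K) ≤ L) :
    IsCaratheodory (controlField X w a) (Fintype.card ι * (η * M)) L where
  aestronglyMeasurable g hg :=
    (Finset.measurable_sum _ fun l _ => (ha.1 l).smul
      (((hK l).continuous.comp hg).measurable.const_smul (w l))).aestronglyMeasurable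
  norm_le := ha.ae_abs_le_one.mono fun _ hs y => norm_sum_control_le hs hw fun l => hM l y
  lipschitzWith := ha.ae_abs_le_one.mono fun s hs => LipschitzWith.of_dist_le_mul fun y z => by
    calc dist (controlField X w a s y) (controlField X w a s z)
        = ‖∑ l, a s l • w l • (X l y - X l z)‖ := by
          simp only [controlField, dist_eq_norm, ← Finset.sum_sub_distrib, ← smul_sub]
      _ ≤ Fintype.card ι * (η * (K * dist y z)) :=
          norm_sum_control_le hs hw fun l => by
            rw [← dist_eq_norm]
            exact (hK l).dist_le_mul y z
      _ = Fintype.card ι * (η * K) * dist y z := by ring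
      _ ≤ L * dist y z := mul_le_mul_of_nonneg_right hL dist_nonneg

theorem SolvesODE.mem_closedBall {δ : Fin ν → ℝ} {a : ℝ → ι → ℝ} {x : Euc n} {g : ℝ → Euc n}
    {r M η : ℝ} (hg : SolvesODE X d δ a x g) (ha : IsSubunit a) (hr : 0 < r)
    (hM : ∀ l, ∀ y ∈ closedBall x r, ‖X l y‖ ≤ M) (hη : ∀ l, dpow δ (d l) ∈ Icc 0 η)
    (hMr : Fintype.card ι * (η * M) < r) {u : ℝ} (hu : u ∈ Icc (0 : ℝ) 1) :
    g u ∈ closedBall x r :=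
  mem_closedBall_of_eq_add_integral hr hMr hg.2
    (ha.ae_abs_le_one.mono fun _ hs hgs => norm_sum_control_le hs hη fun l => hM l _ hgs) hu

theorem solvesODE_of_eq_picard {Y : ι → VF n} {δ : Fin ν → ℝ} {a : ℝ → ι → ℝ} {x : Euc n}
    {g : ℝ → Euc n}
    (hg : ∀ u ∈ Icc (0 : ℝ) 1,
      g u = ODE.picard (controlField Y (fun l => dpow δ (d l)) a) 0 x g u)
    (hYX : ∀ u ∈ Icc (0 : ℝ) 1, ∀ l, Y l (g u) = X l (g u)) : SolvesODE X d δ a x g := by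
  refine ⟨?_, fun u hu => ?_⟩
  · rw [hg 0 (left_mem_Icc.2 zero_le_one), ODE.picard_apply₀]
  · rw [hg u hu, ODE.picard_apply]
    refine congrArg (x + ·) (intervalIntegral.integral_congr fun s hs => ?_)
    rw [uIcc_of_le hu.1] at hs
    exact Finset.sum_congr rfl fun l _ => by rw [hYX s ⟨hs.1, hs.2.trans hu.2⟩ l]

theorem satC_of_eqOn_closedBall {Y : ι → VF n} {δ : Fin ν → ℝ} {x : Euc n} {r M η : ℝ}
    {K : ℝ≥0} (hr : 0 < r) (hrΩ : closedBall x r ⊆ Ω)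
    (hYX : ∀ l, EqOn (Y l) (X l) (closedBall x r)) (hM : ∀ l y, ‖Y l y‖ ≤ M)
    (hK : ∀ l, LipschitzWith K (Y l)) (hη : ∀ l, dpow δ (d l) ∈ Icc 0 η)
    (hMr : Fintype.card ι * (η * M) < r) (hK1 : Fintype.card ι * (η * K) < 1) :
    SatC X d x δ Ω := by
  intro a ha
  obtain ⟨g, hg⟩ := (isCaratheodory_controlField hM hK ha hη
    (Real.le_coe_toNNReal _)).exists_eq_picard (Real.toNNReal_lt_one.2 hK1) x
  have hgY : SolvesODE Y d δ a x g := solvesODE_of_eq_picard hg fun _ _ _ => rfl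
  have hball : ∀ u ∈ Icc (0 : ℝ) 1, g u ∈ closedBall x r := fun u hu =>
    hgY.mem_closedBall ha hr (fun l y _ => hM l y) hη hMr hu
  exact ⟨g, fun u hu => hrΩ (hball u hu),
    solvesODE_of_eq_picard hg fun u hu l => hYX l (hball u hu)⟩

theorem exists_satC_and_CCBall_subset {p : Euc n} (hU : U ∈ 𝓝 p) (hUΩ : U ⊆ Ω)
    (hX : ∀ l, ∀ y ∈ U, ContDiffAt ℝ 1 (X l) y)
    (hd : ∀ l, (∀ μ, 0 ≤ d l μ) ∧ d l ≠ 0) :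
    ∃ r ξ : ℝ, 0 < r ∧ 0 < ξ ∧ closedBall p (2 * r) ⊆ U ∧
      ∀ x ∈ ball p r, SatC X d x (vecConst ν ξ) Ω ∧
        ∀ δ ∈ unitCube ν, CCBall X d Ω x (fun μ => ξ * δ μ) ⊆ closedBall p (2 * r) := by
  obtain ⟨R, hR, hRU⟩ := nhds_basis_closedBall.mem_iff.1 hU
  obtain ⟨r, hr, hrR⟩ : ∃ r, 0 < r ∧ 2 * r < R := ⟨R / 3, by positivity, by linarith⟩
  obtain ⟨Y, M, K, hYX, hM, hK⟩ := exists_bounded_lipschitz_eqOn_closedBall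
    (by positivity) hrR fun l y hy => hX l y (hRU hy)
  obtain ⟨η, hη, hMr, hK1⟩ := exists_pos_mul_mul_lt (Fintype.card ι) M K hr one_pos
  obtain ⟨ξ, hξ, hξη⟩ := exists_pos_dpow_vecConst_le hd hη
  have hsubU : closedBall p (2 * r) ⊆ U := (closedBall_subset_closedBall hrR.le).trans hRU
  refine ⟨r, ξ, hr, hξ, hsubU, fun x hx => ?_⟩
  have hsub : closedBall x r ⊆ closedBall p (2 * r) :=
    closedBall_subset_closedBall' (by linarith [mem_ball.1 hx])
  refine ⟨satC_of_eqOn_closedBall hr (hsub.trans (hsubU.trans hUΩ))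
    (fun l => (hYX l).mono hsub) hM hK
    (fun l => ⟨dpow_nonneg (fun _ => hξ.le) _, hξη l⟩) hMr hK1, ?_⟩
  rintro δ hδ _ ⟨g, a, ha, -, hg, rfl⟩
  have hweight (l : ι) : dpow (fun μ => ξ * δ μ) (d l) ∈ Icc 0 η :=
    ⟨dpow_nonneg (fun μ => mul_nonneg hξ.le (hδ μ).1) _,
      (dpow_const_mul_le hδ (hd l).1 hξ.le).trans (hξη l)⟩
  refine hsub (hg.mem_closedBall ha hr (fun l y hy => ?_) hweight hMr
    (right_mem_Icc.2 zero_le_one))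
  rw [← hYX l (hsub hy)]
  exact hM l y

end CarnotCaratheodory

section Control

variable {N ν n : ℕ} {ι : Type*} [Fintype ι] {Ω U B : Set (Euc n)} {X : ι → VF n}
  {d : ι → Deg ν} {ξ : ℝ}

theorem exists_forall_norm_le_of_finite {T Z F : Type*} [TopologicalSpace Z]
    [SeminormedAddCommGroup F] {S : Set T} (hS : S.Finite) {K : Set Z} (hK : IsCompact K)
    {f : T → Z → F} (hf : ∀ b ∈ S, ContinuousOn (f b) K) :
    ∃ C : ℝ, ∀ b ∈ S, ∀ z ∈ K, ‖f b z‖ ≤ C := by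
  choose! C hC using fun b hb => hK.exists_bound_of_continuousOn (hf b hb)
  obtain ⟨D, hD⟩ := (hS.image C).bddAbove
  exact ⟨D, fun b hb z hz => (hC b hb z hz).trans (hD (mem_image_of_mem C hb))⟩

section Param

variable {Q : Type*} [NormedAddCommGroup Q] [NormedSpace ℝ Q] {K : Set Q}
  {κ : (Fin ν → ℝ) → Q}

/-- The coefficients see `δ` only through `κ δ`: in the applications they are smooth in certain
real powers of `δ`, but not in `δ` itself. -/
theorem controlsOn_of_contDiffAt_param {X₀ : VF n} {d₀ : Deg ν} (hK : IsCompact K)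
    (hB : IsCompact B) (hd : ∀ l μ, 0 ≤ d l μ)
    (hX : ∀ l, ∀ y ∈ B, ContDiffAt ℝ (⊤ : ℕ∞) (X l) y)
    (hsat : ∀ x ∈ U, SatC X d x (vecConst ν ξ) Ω)
    (hsub : ∀ x ∈ U, ∀ δ ∈ unitCube ν, CCBall X d Ω x (fun μ => ξ * δ μ) ⊆ B)
    {c : ι → Q → Euc n → ℝ} (hκ : ∀ δ ∈ unitCube ν, κ δ ∈ K)
    (hc : ∀ l, ∀ z ∈ K ×ˢ B, ContDiffAt ℝ (⊤ : ℕ∞) (fun z : Q × Euc n => c l z.1 z.2) z)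
    (hX₀ : ∀ δ ∈ unitCube ν, ∀ y ∈ B,
      dpow δ d₀ • X₀ y = ∑ l, c l (κ δ) y • dpow δ (d l) • X l y) :
    ControlsOn X d Ω U ξ X₀ d₀ := by
  let G (b : ι × List ι) (z : ((ι → ℝ) × Q) × Euc n) : ℝ :=
    derivList X z.1.1 b.2 (c b.1 z.1.2) z.2
  have hG b : ContinuousOn (G b) ((Icc (0 : ι → ℝ) 1 ×ˢ K) ×ˢ B) := fun z hz =>
    (contDiffAt_derivList (P := (ι → ℝ) × Q) (w := fun p => p.1) (f := fun p => c b.1 p.2)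
      (fun l => hX l _ hz.2) (fun l => by fun_prop)
      ((hc b.1 (z.1.2, z.2) ⟨hz.1.2, hz.2⟩).comp z
        (f := fun z : ((ι → ℝ) × Q) × Euc n => (z.1.2, z.2)) (by fun_prop)) b.2
      ).continuousAt.continuousWithinAt
  have hmem {x δ y} (hx : x ∈ U) (hδ : δ ∈ unitCube ν)
      (hy : y ∈ CCBall X d Ω x (fun μ => ξ * δ μ)) :
      (((fun l => dpow δ (d l)), κ δ), y) ∈ (Icc (0 : ι → ℝ) 1 ×ˢ K) ×ˢ B :=
    ⟨⟨dpow_comp_mem_Icc hδ hd, hκ δ hδ⟩, hsub x hx δ hδ hy⟩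
  refine ⟨hsat, fun _ δ l => c l (κ δ), fun x hx δ hδ y hy => hX₀ δ hδ y (hsub x hx δ hδ hy),
    fun x hx δ hδ l α => (hG (l, α)).comp
      (f := fun y => (((fun l => dpow δ (d l)), κ δ), y)) (by fun_prop)
      fun y hy => hmem hx hδ hy, fun m => ?_⟩
  obtain ⟨C, hC⟩ := exists_forall_norm_le_of_finite
    (finite_univ.prod (List.finite_length_le ι m)) ((isCompact_Icc.prod hK).prod hB)
    fun b _ => hG b
  exact ⟨C, fun x hx δ hδ l α hα y hy => hC (l, α) ⟨mem_univ l, hα⟩ _ (hmem hx hδ hy)⟩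

theorem controlsWOn_of_contDiffAt_param {e : Fin N → Fin ν → ℝ} {W : Euc N → Euc n → Euc n}
    {σ : ℝ} (hK : IsCompact K) (hB : IsCompact B) (hd : ∀ l μ, 0 ≤ d l μ)
    (hX : ∀ l, ∀ y ∈ B, ContDiffAt ℝ (⊤ : ℕ∞) (X l) y)
    (hsat : ∀ x ∈ U, SatC X d x (vecConst ν ξ) Ω)
    (hsub : ∀ x ∈ U, ∀ δ ∈ unitCube ν, CCBall X d Ω x (fun μ => ξ * δ μ) ⊆ B)
    {c : ι → Q → Euc N → Euc n → ℝ} (hκ : ∀ δ ∈ unitCube ν, κ δ ∈ K)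
    (hc : ∀ l, ∀ z ∈ (K ×ˢ closedBall 0 σ) ×ˢ B,
      ContDiffAt ℝ (⊤ : ℕ∞) (fun z : (Q × Euc N) × Euc n => c l z.1.1 z.1.2 z.2) z)
    (hW : ∀ δ ∈ unitCube ν, ∀ t ∈ ball (0 : Euc N) σ, ∀ u ∈ B,
      W (dilate e δ t) u = ∑ l, c l (κ δ) t u • dpow δ (d l) • X l u) :
    ControlsWOn X d e Ω U σ ξ W := by
  let G (b : ι × List (Fin N) × List ι) (z : (((ι → ℝ) × Q) × Euc N) × Euc n) : ℝ :=
    derivTList b.2.1 (derivUList X z.1.1.1 b.2.2 (c b.1 z.1.1.2)) z.1.2 z.2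
  have hG b : ContinuousOn (G b) (((Icc (0 : ι → ℝ) 1 ×ˢ K) ×ˢ closedBall 0 σ) ×ˢ B) :=
    fun z hz => (contDiffAt_derivTList_derivUList (P := (ι → ℝ) × Q) (w := fun p => p.1)
      (F := fun p => c b.1 p.2) (fun l => hX l _ hz.2) (fun l => by fun_prop)
      ((hc b.1 ((z.1.1.2, z.1.2), z.2) ⟨⟨hz.1.1.2, hz.1.2⟩, hz.2⟩).comp z
        (f := fun z : (((ι → ℝ) × Q) × Euc N) × Euc n => ((z.1.1.2, z.1.2), z.2))
        (by fun_prop)) b.2.1 b.2.2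
      ).continuousAt.continuousWithinAt
  have hmem {x δ t u} (hx : x ∈ U) (hδ : δ ∈ unitCube ν) (ht : t ∈ ball (0 : Euc N) σ)
      (hu : u ∈ CCBall X d Ω x (fun μ => ξ * δ μ)) :
      ((((fun l => dpow δ (d l)), κ δ), t), u) ∈
        ((Icc (0 : ι → ℝ) 1 ×ˢ K) ×ˢ closedBall 0 σ) ×ˢ B :=
    ⟨⟨⟨dpow_comp_mem_Icc hδ hd, hκ δ hδ⟩, ball_subset_closedBall ht⟩, hsub x hx δ hδ hu⟩
  refine ⟨hsat, fun _ δ l => c l (κ δ),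
    fun x hx δ hδ t ht u hu => hW δ hδ t ht u (hsub x hx δ hδ hu),
    fun x hx δ hδ l β' β => (hG (l, β', β)).comp
      (f := fun p : Euc N × Euc n => ((((fun l => dpow δ (d l)), κ δ), p.1), p.2))
      (by fun_prop) fun p hp => hmem hx hδ hp.1 hp.2, fun m => ?_⟩
  obtain ⟨C, hC⟩ := exists_forall_norm_le_of_finite
    (finite_univ.prod ((List.finite_length_le (Fin N) m).prod (List.finite_length_le ι m)))
    (((isCompact_Icc.prod hK).prod (isCompact_closedBall _ _)).prod hB) fun b _ => hG b
  exact ⟨C, fun x hx δ hδ l β' β hm t ht u hu => hC (l, β', β)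
    ⟨mem_univ l, (Nat.le_add_right _ _).trans hm, (Nat.le_add_left _ _).trans hm⟩ _
    (hmem hx hδ ht hu)⟩

theorem ControlsPair.of_contDiffAt_param {X₀ : VF n} {d₀ : Deg ν} (hK : IsCompact K)
    (hΩ : IsOpen Ω) (h0 : (0 : Euc n) ∈ Ω) (hX : ∀ l, ContDiffOn ℝ (⊤ : ℕ∞) (X l) Ω)
    (hd : ∀ l, (∀ μ, 0 ≤ d l μ) ∧ d l ≠ 0) (hU : U ∈ 𝓝 0)
    {c : ι → Q → Euc n → ℝ} (hκ : ∀ δ ∈ unitCube ν, κ δ ∈ K)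
    (hc : ∀ l, ∀ z ∈ K ×ˢ U, ContDiffAt ℝ (⊤ : ℕ∞) (fun z : Q × Euc n => c l z.1 z.2) z)
    (hX₀ : ∀ δ ∈ unitCube ν, ∀ y ∈ U,
      dpow δ d₀ • X₀ y = ∑ l, c l (κ δ) y • dpow δ (d l) • X l y) :
    ControlsPair X d Ω X₀ d₀ := by
  have hX' (l : ι) {y} (hy : y ∈ Ω) : ContDiffAt ℝ (⊤ : ℕ∞) (X l) y :=
    (hX l).contDiffAt (hΩ.mem_nhds hy)
  obtain ⟨r, ξ, hr, hξ, hrU, hsat⟩ := exists_satC_and_CCBall_subset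
    (inter_mem hU (hΩ.mem_nhds h0)) inter_subset_right
    (fun l y hy => (hX' l hy.2).of_le (by simp)) hd
  exact ⟨ball 0 r, ξ, isOpen_ball, mem_ball_self hr,
    fun x hx => (hrU (ball_subset_closedBall_two_mul hx)).2, hξ,
    controlsOn_of_contDiffAt_param hK (isCompact_closedBall 0 (2 * r)) (fun l => (hd l).1)
      (fun l y hy => hX' l (hrU hy).2) (fun x hx => (hsat x hx).1) (fun x hx => (hsat x hx).2)
      hκ (fun l z hz => hc l z ⟨hz.1, (hrU hz.2).1⟩) fun δ hδ y hy => hX₀ δ hδ y (hrU hy).1⟩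

theorem ControlsW.of_contDiffAt_param {e : Fin N → Fin ν → ℝ} {W : Euc N → Euc n → Euc n}
    {σ ρ : ℝ} (hσ : 0 < σ) (hσρ : σ ≤ ρ) (hK : IsCompact K) (hΩ : IsOpen Ω)
    (h0 : (0 : Euc n) ∈ Ω) (hX : ∀ l, ContDiffOn ℝ (⊤ : ℕ∞) (X l) Ω)
    (hd : ∀ l, (∀ μ, 0 ≤ d l μ) ∧ d l ≠ 0) (hU : U ∈ 𝓝 0)
    {c : ι → Q → Euc N → Euc n → ℝ} (hκ : ∀ δ ∈ unitCube ν, κ δ ∈ K)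
    (hc : ∀ l, ∀ z ∈ (K ×ˢ closedBall 0 σ) ×ˢ U,
      ContDiffAt ℝ (⊤ : ℕ∞) (fun z : (Q × Euc N) × Euc n => c l z.1.1 z.1.2 z.2) z)
    (hW : ∀ δ ∈ unitCube ν, ∀ t ∈ ball (0 : Euc N) σ, ∀ u ∈ U,
      W (dilate e δ t) u = ∑ l, c l (κ δ) t u • dpow δ (d l) • X l u) :
    ControlsW X d e Ω ρ W := by
  have hX' (l : ι) {y} (hy : y ∈ Ω) : ContDiffAt ℝ (⊤ : ℕ∞) (X l) y :=
    (hX l).contDiffAt (hΩ.mem_nhds hy)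
  obtain ⟨r, ξ, hr, hξ, hrU, hsat⟩ := exists_satC_and_CCBall_subset
    (inter_mem hU (hΩ.mem_nhds h0)) inter_subset_right
    (fun l y hy => (hX' l hy.2).of_le (by simp)) hd
  exact ⟨σ, ξ, ball 0 r, hσ, hσρ, hξ, isOpen_ball, mem_ball_self hr,
    fun x hx => (hrU (ball_subset_closedBall_two_mul hx)).2,
    controlsWOn_of_contDiffAt_param hK (isCompact_closedBall 0 (2 * r)) (fun l => (hd l).1)
      (fun l y hy => hX' l (hrU hy).2) (fun x hx => (hsat x hx).1) (fun x hx => (hsat x hx).2)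
      hκ (fun l z hz => hc l z ⟨hz.1, (hrU hz.2).1⟩)
      fun δ hδ t ht u hu => hW δ hδ t ht u (hrU hu).1⟩

end Param

theorem dpow_smul_sum_eq {V : Type*} [AddCommGroup V] [Module ℝ V] {δ : Fin ν → ℝ}
    (hδ : ∀ μ, 0 ≤ δ μ) {d₀ : Deg ν} (hd : ∀ l μ, 0 ≤ d l μ) {b : ι → ℝ}
    (hb : ∀ l, ¬ (∀ μ, d l μ ≤ d₀ μ) → b l = 0) (v : ι → V) :
    dpow δ d₀ • ∑ l, b l • v l =
      ∑ l, (dpow δ (d₀ - d l)⁺ * b l) • dpow δ (d l) • v l := by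
  rw [Finset.smul_sum]
  refine Finset.sum_congr rfl fun l _ => ?_
  by_cases hle : ∀ μ, d l μ ≤ d₀ μ
  · have hpos : (d₀ - d l)⁺ = d₀ - d l := posPart_of_nonneg (sub_nonneg.2 hle)
    rw [hpos, ← dpow_sub_mul_dpow hδ (hd l) hle, smul_smul, smul_smul, mul_right_comm]
  · simp only [hb l hle, mul_zero, zero_smul, smul_zero]

theorem sum_monomial_dilate_smul_eq {V : Type*} [AddCommGroup V] [Module ℝ V]
    {δ : Fin ν → ℝ} (hδ : ∀ μ, 0 ≤ δ μ) {e : Fin N → Fin ν → ℝ} (he : ∀ i μ, 0 ≤ e i μ)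
    {d₀ : Deg ν} {b : (Fin N → ℕ) → ℝ} (hb : ∀ α, degMulti e α ≠ d₀ → b α = 0)
    (A : Finset (Fin N → ℕ)) (t : Euc N) (v : V) :
    ∑ α ∈ A, (b α * monomial α (dilate e δ t)) • v =
      (∑ α ∈ A, b α * monomial α t) • dpow δ d₀ • v := by
  rw [smul_smul, Finset.sum_mul, Finset.sum_smul]
  refine Finset.sum_congr rfl fun α _ => ?_
  rw [monomial_dilate hδ he]
  by_cases hα : degMulti e α = d₀
  · rw [hα, mul_right_comm, mul_assoc]
  · simp only [hb α hα, zero_mul, zero_smul]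

theorem StrongControlsOn.controlsPair {X₀ : VF n} {d₀ : Deg ν} (hΩ : IsOpen Ω)
    (h0 : (0 : Euc n) ∈ Ω) (hX : ∀ l, ContDiffOn ℝ (⊤ : ℕ∞) (X l) Ω)
    (hd : ∀ l, (∀ μ, 0 ≤ d l μ) ∧ d l ≠ 0) (h : StrongControlsOn X d X₀ d₀) :
    ControlsPair X d Ω X₀ d₀ := by
  obtain ⟨U, V, c, hU, hU0, hV, hUV, hc, hc0, hX₀⟩ := h
  refine ControlsPair.of_contDiffAt_param (Q := ι → ℝ)
    (κ := fun δ l => dpow δ (d₀ - d l)⁺) (c := fun l s y => s l * c l y)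
    isCompact_Icc hΩ h0 hX hd (hU.mem_nhds hU0)
    (fun δ hδ => dpow_comp_mem_Icc hδ fun l μ => posPart_nonneg _) (fun l z hz => ?_)
    fun δ hδ y hy => ?_
  · have hcl : ContDiffAt ℝ (⊤ : ℕ∞) (c l) z.2 :=
      (hc l).contDiffAt (hV.mem_nhds (hUV (subset_closure hz.2)))
    exact ContDiffAt.mul (by fun_prop) (hcl.comp z contDiffAt_snd)
  · rw [hX₀ y hy]
    exact dpow_smul_sum_eq (fun μ => (hδ μ).1) (fun l => (hd l).1)
      (fun l hl => congrFun (hc0 l hl) y) _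

theorem StrongControlsW.controlsW {e : Fin N → Fin ν → ℝ} (he : ∀ i μ, 0 ≤ e i μ)
    {W : Euc N → Euc n → Euc n} {ρ : ℝ} (hρ : 0 < ρ) (hΩ : IsOpen Ω)
    (h0 : (0 : Euc n) ∈ Ω) (hX : ∀ l, ContDiffOn ℝ (⊤ : ℕ∞) (X l) Ω)
    (hd : ∀ l, (∀ μ, 0 ≤ d l μ) ∧ d l ≠ 0) (h : StrongControlsW X d e W) :
    ControlsW X d e Ω ρ W := by
  obtain ⟨ρ', U, V, A, c, hρ', hU, hU0, hV, hUV, hc, hc0, hW⟩ := h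
  obtain ⟨σ, hσ, hσρ, hσρ'⟩ : ∃ σ, 0 < σ ∧ σ ≤ ρ ∧ σ < ρ' :=
    ⟨min ρ (ρ' / 2), by positivity, min_le_left _ _, (min_le_right _ _).trans_lt (by linarith)⟩
  have hscale {s t} (hs : s ∈ Icc (0 : Fin N → ℝ) 1) (ht : t ∈ closedBall (0 : Euc N) σ) :
      coordMul s t ∈ ball (0 : Euc N) ρ' :=
    mem_ball_zero_iff.2 ((norm_coordMul_le hs t).trans_lt
      ((mem_closedBall_zero_iff.1 ht).trans_lt hσρ'))
  refine ControlsW.of_contDiffAt_param (Q := Fin N → ℝ) (κ := fun δ i => dpow δ (e i))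
    (c := fun l s t u => ∑ α ∈ A, c l α (coordMul s t) u * monomial α t)
    hσ hσρ isCompact_Icc hΩ h0 hX hd (hU.mem_nhds hU0) (fun δ hδ => dpow_comp_mem_Icc hδ he)
    (fun l z hz => ContDiffAt.sum fun α _ => ?_) fun δ hδ t ht u hu => ?_
  · have hclα : ContDiffAt ℝ (⊤ : ℕ∞) (fun p : Euc N × Euc n => c l α p.1 p.2)
        (coordMul z.1.1 z.1.2, z.2) :=
      (hc l α).contDiffAt (hV.mem_nhds (hUV (subset_closure ⟨hscale hz.1.1 hz.1.2, hz.2⟩)))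
    refine ContDiffAt.mul (hclα.comp z (f := fun z : ((Fin N → ℝ) × Euc N) × Euc n =>
      (coordMul z.1.1 z.1.2, z.2)) ?_) ?_
    · exact (contDiff_coordMul.contDiffAt.comp z contDiffAt_fst).prodMk contDiffAt_snd
    · exact (contDiff_monomial α).contDiffAt.comp z (by fun_prop)
  · have hδt : dilate e δ t ∈ ball (0 : Euc N) ρ' := by
      rw [dilate_eq_coordMul]
      exact hscale (dpow_comp_mem_Icc hδ he) (ball_subset_closedBall ht)
    rw [hW _ hδt u hu]
    exact Finset.sum_congr rfl fun l _ =>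
      sum_monomial_dilate_smul_eq (fun μ => (hδ μ).1) he
        (fun α hα => congrFun₂ (hc0 l α hα) _ _) A t _

end Control

end Zhang

open Zhang

/-- Lemma 6.1: strong control implies control, both for a pair
`(X₀,d₀)` and for `W`. -/
theorem statement_5 {N ν n q : ℕ}
    (e : Fin N → Fin ν → ℝ) (he : AdmissibleE e)
    (Ω : Set (Euc n)) (hΩ : IsOpen Ω) (h0 : (0 : Euc n) ∈ Ω)
    (X₀ : VF n) (d₀ : Deg ν) (X : Fin q → VF n) (d : Fin q → Deg ν)
    (hX₀s : ContDiffOn ℝ (⊤ : ℕ∞) X₀ Ω) (hXs : ∀ l, ContDiffOn ℝ (⊤ : ℕ∞) (X l) Ω)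
    (hd₀ : (∀ μ, 0 ≤ d₀ μ) ∧ d₀ ≠ 0) (hd : ∀ l, (∀ μ, 0 ≤ d l μ) ∧ d l ≠ 0)
    (ρ : ℝ) (hρ : 0 < ρ) (W : Euc N → Euc n → Euc n)
    (hWs : ContDiffOn ℝ (⊤ : ℕ∞) (fun q : Euc N × Euc n => W q.1 q.2) (ball 0 ρ ×ˢ Ω))
    (hW0 : ∀ x ∈ Ω, W 0 x = 0) :
    (StrongControlsOn X d X₀ d₀ → ControlsPair X d Ω X₀ d₀) ∧
    (StrongControlsW X d e W → ControlsW X d e Ω ρ W) := by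
  exact ⟨fun h => h.controlsPair hΩ h0 hXs hd, fun h => h.controlsW he.1 hρ hΩ h0 hXs hd⟩
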